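/- arXiv:2212.13600 — 9 statements merged into one kernel-verified Lean document; each statement's English description precedes it below -/
import Mathlib

section
/- If (A,·_A,[·,·,·]_A) is a ternary F-manifold algebra and (B,·_B) is a commutative associative algebra over K, then the tensor product A⊗B is a ternary F-manifold algebra, where (x1⊗y1)·(x2⊗y2) = (x1·_A x2)⊗(y1·_B y2) and [x1⊗y1, x2⊗y2, x3⊗y3] = [x1,x2,x3]_A ⊗ (y1·_B y2·_B y3) for all xi ∈ A, yi ∈ B. -/
open TensorProduct

/-- The 3-Leibnizator `L(x1,x2,x3,x4) = [x1,x2,x3·x4] − x3·[x1,x2,x4] − [x1,x2,x3]·x4`. -/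
def leib3 {K : Type*} [Field K] {A : Type*} [AddCommGroup A] [Module K A]
    (m : A →ₗ[K] A →ₗ[K] A) (b : A →ₗ[K] A →ₗ[K] A →ₗ[K] A) (x1 x2 x3 x4 : A) : A :=
  b x1 x2 (m x3 x4) - m x3 (b x1 x2 x4) - m (b x1 x2 x3) x4

/-- A ternary F-manifold algebra. -/
structure TernaryFM (K : Type*) [Field K] (A : Type*) [AddCommGroup A] [Module K A] where
  mul : A →ₗ[K] A →ₗ[K] A
  br : A →ₗ[K] A →ₗ[K] A →ₗ[K] A
  mul_comm : ∀ x y, mul x y = mul y x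
  mul_assoc : ∀ x y z, mul (mul x y) z = mul x (mul y z)
  br_skew₁₂ : ∀ x y z, br x y z = - br y x z
  br_skew₂₃ : ∀ x y z, br x y z = - br x z y
  fund : ∀ x1 x2 x3 x4 x5,
    br x1 x2 (br x3 x4 x5) =
      br (br x1 x2 x3) x4 x5 + br x3 (br x1 x2 x4) x5 + br x3 x4 (br x1 x2 x5)
  leib : ∀ x1 x2 x3 x4 x5,
    leib3 mul br (mul x1 x2) x3 x4 x5 =
      mul x1 (leib3 mul br x2 x3 x4 x5) + mul x2 (leib3 mul br x1 x3 x4 x5)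

/-- A commutative associative algebra structure (as a bilinear map). -/
structure CommAssocAlg (K : Type*) [Field K] (B : Type*) [AddCommGroup B] [Module K B] where
  mul : B →ₗ[K] B →ₗ[K] B
  mul_comm : ∀ x y, mul x y = mul y x
  mul_assoc : ∀ x y z, mul (mul x y) z = mul x (mul y z)

/-- A ternary Nambu–Poisson algebra. -/
structure TernaryNP (K : Type*) [Field K] (A : Type*) [AddCommGroup A] [Module K A] where
  mul : A →ₗ[K] A →ₗ[K] A
  br : A →ₗ[K] A →ₗ[K] A →ₗ[K] A
  mul_comm : ∀ x y, mul x y = mul y x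
  mul_assoc : ∀ x y z, mul (mul x y) z = mul x (mul y z)
  br_skew₁₂ : ∀ x y z, br x y z = - br y x z
  br_skew₂₃ : ∀ x y z, br x y z = - br x z y
  fund : ∀ x1 x2 x3 x4 x5,
    br x1 x2 (br x3 x4 x5) =
      br (br x1 x2 x3) x4 x5 + br x3 (br x1 x2 x4) x5 + br x3 x4 (br x1 x2 x5)
  leibniz : ∀ x1 x2 x3 x4,
    br x1 x2 (mul x3 x4) = mul x3 (br x1 x2 x4) + mul (br x1 x2 x3) x4

/-- The binary Leibnizator `L(x,y,z) = [x,y·z] − [x,y]·z − y·[x,z]`. -/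
def leib2 {K : Type*} [Field K] {A : Type*} [AddCommGroup A] [Module K A]
    (m : A →ₗ[K] A →ₗ[K] A) (b : A →ₗ[K] A →ₗ[K] A) (x y z : A) : A :=
  b x (m y z) - m (b x y) z - m y (b x z)

/-- An F-manifold algebra. -/
structure FManifoldAlg (K : Type*) [Field K] (A : Type*) [AddCommGroup A] [Module K A] where
  mul : A →ₗ[K] A →ₗ[K] A
  br : A →ₗ[K] A →ₗ[K] A
  mul_comm : ∀ x y, mul x y = mul y x
  mul_assoc : ∀ x y z, mul (mul x y) z = mul x (mul y z)
  br_skew : ∀ x y, br x y = - br y x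
  jacobi : ∀ x y z, br x (br y z) + br y (br z x) + br z (br x y) = 0
  hm : ∀ x y z w,
    leib2 mul br (mul x y) z w = mul x (leib2 mul br y z w) + mul y (leib2 mul br x z w)

section Rep

variable {K : Type*} [Field K] {A V : Type*} [AddCommGroup A] [Module K A]
  [AddCommGroup V] [Module K V]

/-- Representation of the underlying 3-Lie algebra. -/
def Is3LieRep (T : TernaryFM K A) (ρ : A →ₗ[K] A →ₗ[K] V →ₗ[K] V) : Prop :=
  (∀ x y, ρ x y = - ρ y x) ∧
  (∀ x1 x2 x3 x4,
    ρ x1 x2 ∘ₗ ρ x3 x4 - ρ x3 x4 ∘ₗ ρ x1 x2 = ρ (T.br x1 x2 x3) x4 - ρ (T.br x1 x2 x4) x3) ∧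
  (∀ x1 x2 x3 x4,
    ρ (T.br x1 x2 x3) x4 = ρ x1 x2 ∘ₗ ρ x3 x4 + ρ x2 x3 ∘ₗ ρ x1 x4 + ρ x3 x1 ∘ₗ ρ x2 x4)

/-- Representation of the underlying commutative associative algebra. -/
def IsAssocRep (T : TernaryFM K A) (μ : A →ₗ[K] V →ₗ[K] V) : Prop :=
  ∀ x y, μ (T.mul x y) = μ x ∘ₗ μ y

/-- `L1(x,y,z,u) = ρ(x,y)μ(z)u − μ(z)ρ(x,y)u − μ([x,y,z])u`. -/
def L1 (T : TernaryFM K A) (ρ : A →ₗ[K] A →ₗ[K] V →ₗ[K] V) (μ : A →ₗ[K] V →ₗ[K] V)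
    (x y z : A) (u : V) : V :=
  ρ x y (μ z u) - μ z (ρ x y u) - μ (T.br x y z) u

/-- `L2(x,y,z,u) = μ(z)ρ(x,y)u + μ(y)ρ(x,z)u − ρ(x,y·z)u`. -/
def L2 (T : TernaryFM K A) (ρ : A →ₗ[K] A →ₗ[K] V →ₗ[K] V) (μ : A →ₗ[K] V →ₗ[K] V)
    (x y z : A) (u : V) : V :=
  μ z (ρ x y u) + μ y (ρ x z u) - ρ x (T.mul y z) u

/-- `L3(x,y,z,u) = ρ(x,y)μ(z)u + ρ(x,z)μ(y)u − ρ(x,y·z)u`. -/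
def L3 (T : TernaryFM K A) (ρ : A →ₗ[K] A →ₗ[K] V →ₗ[K] V) (μ : A →ₗ[K] V →ₗ[K] V)
    (x y z : A) (u : V) : V :=
  ρ x y (μ z u) + ρ x z (μ y u) - ρ x (T.mul y z) u

/-- Representation of a ternary F-manifold algebra. -/
def IsFMRep (T : TernaryFM K A) (ρ : A →ₗ[K] A →ₗ[K] V →ₗ[K] V)
    (μ : A →ₗ[K] V →ₗ[K] V) : Prop :=
  Is3LieRep T ρ ∧ IsAssocRep T μ ∧
  (∀ x1 x2 x3 x4 u, L1 T ρ μ (T.mul x1 x2) x3 x4 u =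
      μ x1 (L1 T ρ μ x2 x3 x4 u) + μ x2 (L1 T ρ μ x1 x3 x4 u)) ∧
  (∀ x1 x2 x3 x4 u, L2 T ρ μ (T.mul x1 x2) x3 x4 u =
      μ x1 (L2 T ρ μ x2 x3 x4 u) + μ x2 (L2 T ρ μ x1 x3 x4 u)) ∧
  (∀ x1 x2 x3 x4 u, μ (leib3 T.mul T.br x1 x2 x3 x4) u =
      L2 T ρ μ x2 x3 x4 (μ x1 u) - μ x1 (L2 T ρ μ x2 x3 x4 u))

/-- Relative Rota–Baxter operator on a ternary F-manifold algebra. -/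
def IsRelRB (T : TernaryFM K A) (ρ : A →ₗ[K] A →ₗ[K] V →ₗ[K] V)
    (μ : A →ₗ[K] V →ₗ[K] V) (Tm : V →ₗ[K] A) : Prop :=
  (∀ u v, T.mul (Tm u) (Tm v) = Tm (μ (Tm u) v + μ (Tm v) u)) ∧
  (∀ u v w, T.br (Tm u) (Tm v) (Tm w) =
      Tm (ρ (Tm u) (Tm v) w + ρ (Tm v) (Tm w) u + ρ (Tm w) (Tm u) v))

end Rep

section Pre

variable {K : Type*} [Field K] {A : Type*} [AddCommGroup A] [Module K A]

/-- Cyclic sum bracket `[x,y,z]^C = {x,y,z} + {y,z,x} + {z,x,y}`. -/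
def cbr (t : A →ₗ[K] A →ₗ[K] A →ₗ[K] A) (x y z : A) : A :=
  t x y z + t y z x + t z x y

/-- Symmetrized product `x·y = x⋄y + y⋄x`. -/
def sym (d : A →ₗ[K] A →ₗ[K] A) (x y : A) : A := d x y + d y x

/-- `F1(x1,x2,x3,x4) = {x1,x2,x3⋄x4} − x3⋄{x1,x2,x4} − [x1,x2,x3]⋄x4`. -/
def F1 (d : A →ₗ[K] A →ₗ[K] A) (t : A →ₗ[K] A →ₗ[K] A →ₗ[K] A) (x1 x2 x3 x4 : A) : A :=
  t x1 x2 (d x3 x4) - d x3 (t x1 x2 x4) - d (cbr t x1 x2 x3) x4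

/-- `F2(x1,x2,x3,x4) = x3⋄{x1,x2,x4} + x2⋄{x1,x3,x4} − {x1,x2·x3,x4}`. -/
def F2 (d : A →ₗ[K] A →ₗ[K] A) (t : A →ₗ[K] A →ₗ[K] A →ₗ[K] A) (x1 x2 x3 x4 : A) : A :=
  d x3 (t x1 x2 x4) + d x2 (t x1 x3 x4) - t x1 (sym d x2 x3) x4

/-- The 3-Leibnizator of the sub-adjacent operations. -/
def Lpre (d : A →ₗ[K] A →ₗ[K] A) (t : A →ₗ[K] A →ₗ[K] A →ₗ[K] A) (x1 x2 x3 x4 : A) : A :=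
  cbr t x1 x2 (sym d x3 x4) - sym d x3 (cbr t x1 x2 x4) - sym d (cbr t x1 x2 x3) x4

/-- A 3-pre-Lie algebra. -/
structure ThreePreLie (K : Type*) [Field K] (A : Type*) [AddCommGroup A] [Module K A] where
  tri : A →ₗ[K] A →ₗ[K] A →ₗ[K] A
  tri_skew : ∀ x y z, tri x y z = - tri y x z
  preLie₁ : ∀ x1 x2 x3 x4 x5,
    tri x1 x2 (tri x3 x4 x5) =
      tri (cbr tri x1 x2 x3) x4 x5 + tri x3 (cbr tri x1 x2 x4) x5 + tri x3 x4 (tri x1 x2 x5)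
  preLie₂ : ∀ x1 x2 x3 x4 x5,
    tri (cbr tri x1 x2 x3) x4 x5 =
      tri x1 x2 (tri x3 x4 x5) + tri x2 x3 (tri x1 x4 x5) + tri x3 x1 (tri x2 x4 x5)

/-- A ternary pre-F-manifold algebra. -/
structure TernaryPreFM (K : Type*) [Field K] (A : Type*) [AddCommGroup A] [Module K A] where
  dia : A →ₗ[K] A →ₗ[K] A
  tri : A →ₗ[K] A →ₗ[K] A →ₗ[K] A
  zinbiel : ∀ x y z, dia x (dia y z) = dia (dia y x) z + dia (dia x y) z
  tri_skew : ∀ x y z, tri x y z = - tri y x z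
  preLie₁ : ∀ x1 x2 x3 x4 x5,
    tri x1 x2 (tri x3 x4 x5) =
      tri (cbr tri x1 x2 x3) x4 x5 + tri x3 (cbr tri x1 x2 x4) x5 + tri x3 x4 (tri x1 x2 x5)
  preLie₂ : ∀ x1 x2 x3 x4 x5,
    tri (cbr tri x1 x2 x3) x4 x5 =
      tri x1 x2 (tri x3 x4 x5) + tri x2 x3 (tri x1 x4 x5) + tri x3 x1 (tri x2 x4 x5)
  pf1 : ∀ x1 x2 x3 x4 x5,
    F1 dia tri (sym dia x1 x2) x3 x4 x5 =
      dia x1 (F1 dia tri x2 x3 x4 x5) + dia x2 (F1 dia tri x1 x3 x4 x5)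
  pf2 : ∀ x1 x2 x3 x4 x5,
    F2 dia tri (sym dia x1 x2) x3 x4 x5 =
      dia x1 (F2 dia tri x2 x3 x4 x5) + dia x2 (F2 dia tri x1 x3 x4 x5)
  pf3 : ∀ x1 x2 x3 x4 x5,
    dia (Lpre dia tri x1 x2 x3 x4) x5 =
      F2 dia tri x2 x3 x4 (dia x1 x5) - dia x1 (F2 dia tri x2 x3 x4 x5)

/-- A ternary pre-Nambu–Poisson algebra. -/
structure TernaryPreNP (K : Type*) [Field K] (A : Type*) [AddCommGroup A] [Module K A] where
  dia : A →ₗ[K] A →ₗ[K] A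
  tri : A →ₗ[K] A →ₗ[K] A →ₗ[K] A
  zinbiel : ∀ x y z, dia x (dia y z) = dia (dia y x) z + dia (dia x y) z
  tri_skew : ∀ x y z, tri x y z = - tri y x z
  preLie₁ : ∀ x1 x2 x3 x4 x5,
    tri x1 x2 (tri x3 x4 x5) =
      tri (cbr tri x1 x2 x3) x4 x5 + tri x3 (cbr tri x1 x2 x4) x5 + tri x3 x4 (tri x1 x2 x5)
  preLie₂ : ∀ x1 x2 x3 x4 x5,
    tri (cbr tri x1 x2 x3) x4 x5 =
      tri x1 x2 (tri x3 x4 x5) + tri x2 x3 (tri x1 x4 x5) + tri x3 x1 (tri x2 x4 x5)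
  np1 : ∀ x1 x2 x3 x4,
    tri x1 x2 (dia x3 x4) = dia x3 (tri x1 x2 x4) + dia (cbr tri x1 x2 x3) x4
  np2 : ∀ x1 x2 x3 x4,
    tri x1 (sym dia x2 x3) x4 = dia x3 (tri x1 x2 x4) + dia x2 (tri x1 x3 x4)

end Pre

/-- The coherence map `K(x,y,z,u) = [x,y,z·u] + [x,z,u·y] + [x,u,y·z]`. -/
def kmap {K : Type*} [Field K] {A : Type*} [AddCommGroup A] [Module K A]
    (T : TernaryFM K A) (x y z u : A) : A :=
  T.br x y (T.mul z u) + T.br x z (T.mul u y) + T.br x u (T.mul y z)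

section SD

variable {K : Type*} [Field K] {A V : Type*} [AddCommGroup A] [Module K A]
  [AddCommGroup V] [Module K V]

/-- Semidirect product multiplication on `A × V`. -/
def sdMul (T : TernaryFM K A) (μ : A →ₗ[K] V →ₗ[K] V) (p q : A × V) : A × V :=
  (T.mul p.1 q.1, μ p.1 q.2 + μ q.1 p.2)

/-- Semidirect product ternary bracket on `A × V`. -/
def sdBr (T : TernaryFM K A) (ρ : A →ₗ[K] A →ₗ[K] V →ₗ[K] V) (p q r : A × V) : A × V :=
  (T.br p.1 q.1 r.1, ρ p.1 q.1 r.2 - ρ p.1 r.1 q.2 + ρ q.1 r.1 p.2)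

/-- The Nijenhuis operator `N_T(x+u) = Tu` on `A × V`. -/
def nT (Tm : V →ₗ[K] A) (p : A × V) : A × V := (Tm p.2, 0)

end SD

section TensorProof

variable {K : Type*} [Field K] {A B : Type*} [AddCommGroup A] [Module K A]
  [AddCommGroup B] [Module K B]

/-- Multiplication on the tensor product. -/
noncomputable def tMul (TA : TernaryFM K A) (MB : CommAssocAlg K B) :
    A ⊗[K] B →ₗ[K] A ⊗[K] B →ₗ[K] A ⊗[K] B :=
  TensorProduct.map₂ TA.mul MB.mul

/-- Ternary bracket on the tensor product. -/
noncomputable def tBr (TA : TernaryFM K A) (MB : CommAssocAlg K B) :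
    A ⊗[K] B →ₗ[K] A ⊗[K] B →ₗ[K] A ⊗[K] B →ₗ[K] A ⊗[K] B :=
  (TensorProduct.map₂ TA.br (MB.mul.compr₂ MB.mul)).compr₂
    (TensorProduct.homTensorHomMap (RingHom.id K) A B A B)

theorem tMul_tmul (TA : TernaryFM K A) (MB : CommAssocAlg K B) (x1 x2 : A) (y1 y2 : B) :
    tMul TA MB (x1 ⊗ₜ[K] y1) (x2 ⊗ₜ[K] y2) = (TA.mul x1 x2) ⊗ₜ[K] (MB.mul y1 y2) := by
  simp [tMul]

theorem tBr_tmul (TA : TernaryFM K A) (MB : CommAssocAlg K B) (x1 x2 x3 : A) (y1 y2 y3 : B) :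
    tBr TA MB (x1 ⊗ₜ[K] y1) (x2 ⊗ₜ[K] y2) (x3 ⊗ₜ[K] y3) =
      (TA.br x1 x2 x3) ⊗ₜ[K] (MB.mul (MB.mul y1 y2) y3) := by
  simp [tBr]

theorem mB_left_comm (MB : CommAssocAlg K B) (x y z : B) :
    MB.mul x (MB.mul y z) = MB.mul y (MB.mul x z) := by
  rw [← MB.mul_assoc, MB.mul_comm x y, MB.mul_assoc]

theorem t_comm (TA : TernaryFM K A) (MB : CommAssocAlg K B) (x y : A ⊗[K] B) :
    tMul TA MB x y = tMul TA MB y x := by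
  induction x using TensorProduct.induction_on with
  | zero => simp
  | add a b h1 h2 =>
    simp only [map_add, LinearMap.add_apply, map_sub, LinearMap.sub_apply] at *
    linear_combination (norm := module) h1 + h2
  | tmul ax cx =>
  induction y using TensorProduct.induction_on with
  | zero => simp
  | add a b h1 h2 =>
    simp only [map_add, LinearMap.add_apply, map_sub, LinearMap.sub_apply] at *
    linear_combination (norm := module) h1 + h2
  | tmul ay cy =>
  rw [tMul_tmul, tMul_tmul, TA.mul_comm, MB.mul_comm]

theorem t_assoc (TA : TernaryFM K A) (MB : CommAssocAlg K B) (x y z : A ⊗[K] B) :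
    tMul TA MB (tMul TA MB x y) z = tMul TA MB x (tMul TA MB y z) := by
  induction x using TensorProduct.induction_on with
  | zero => simp
  | add a b h1 h2 =>
    simp only [map_add, LinearMap.add_apply, map_sub, LinearMap.sub_apply] at *
    linear_combination (norm := module) h1 + h2
  | tmul ax cx =>
  induction y using TensorProduct.induction_on with
  | zero => simp
  | add a b h1 h2 =>
    simp only [map_add, LinearMap.add_apply, map_sub, LinearMap.sub_apply] at *
    linear_combination (norm := module) h1 + h2
  | tmul ay cy =>
  induction z using TensorProduct.induction_on with
  | zero => simp
  | add a b h1 h2 =>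
    simp only [map_add, LinearMap.add_apply, map_sub, LinearMap.sub_apply] at *
    linear_combination (norm := module) h1 + h2
  | tmul az cz =>
  simp only [tMul_tmul, TA.mul_assoc, MB.mul_assoc]

theorem t_skew12 (TA : TernaryFM K A) (MB : CommAssocAlg K B) (x y z : A ⊗[K] B) :
    tBr TA MB x y z = - tBr TA MB y x z := by
  induction x using TensorProduct.induction_on with
  | zero => simp
  | add a b h1 h2 =>
    simp only [map_add, LinearMap.add_apply, map_sub, LinearMap.sub_apply] at *
    linear_combination (norm := module) h1 + h2
  | tmul ax cx =>
  induction y using TensorProduct.induction_on with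
  | zero => simp
  | add a b h1 h2 =>
    simp only [map_add, LinearMap.add_apply, map_sub, LinearMap.sub_apply] at *
    linear_combination (norm := module) h1 + h2
  | tmul ay cy =>
  induction z using TensorProduct.induction_on with
  | zero => simp
  | add a b h1 h2 =>
    simp only [map_add, LinearMap.add_apply, map_sub, LinearMap.sub_apply] at *
    linear_combination (norm := module) h1 + h2
  | tmul az cz =>
  rw [tBr_tmul, tBr_tmul, TA.br_skew₁₂, MB.mul_comm cx cy, TensorProduct.neg_tmul]

theorem t_skew23 (TA : TernaryFM K A) (MB : CommAssocAlg K B) (x y z : A ⊗[K] B) :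
    tBr TA MB x y z = - tBr TA MB x z y := by
  induction x using TensorProduct.induction_on with
  | zero => simp
  | add a b h1 h2 =>
    simp only [map_add, LinearMap.add_apply, map_sub, LinearMap.sub_apply] at *
    linear_combination (norm := module) h1 + h2
  | tmul ax cx =>
  induction y using TensorProduct.induction_on with
  | zero => simp
  | add a b h1 h2 =>
    simp only [map_add, LinearMap.add_apply, map_sub, LinearMap.sub_apply] at *
    linear_combination (norm := module) h1 + h2
  | tmul ay cy =>
  induction z using TensorProduct.induction_on with
  | zero => simp
  | add a b h1 h2 =>
    simp only [map_add, LinearMap.add_apply, map_sub, LinearMap.sub_apply] at *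
    linear_combination (norm := module) h1 + h2
  | tmul az cz =>
  rw [tBr_tmul, tBr_tmul, TA.br_skew₂₃, TensorProduct.neg_tmul]
  simp only [MB.mul_assoc, MB.mul_comm, mB_left_comm MB]

theorem t_fund (TA : TernaryFM K A) (MB : CommAssocAlg K B) (x1 x2 x3 x4 x5 : A ⊗[K] B) :
    tBr TA MB x1 x2 (tBr TA MB x3 x4 x5) =
      tBr TA MB (tBr TA MB x1 x2 x3) x4 x5 + tBr TA MB x3 (tBr TA MB x1 x2 x4) x5 + tBr TA MB x3 x4 (tBr TA MB x1 x2 x5) := by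
  induction x1 using TensorProduct.induction_on with
  | zero => simp
  | add a b h1 h2 =>
    simp only [map_add, LinearMap.add_apply, map_sub, LinearMap.sub_apply] at *
    linear_combination (norm := module) h1 + h2
  | tmul ax1 cx1 =>
  induction x2 using TensorProduct.induction_on with
  | zero => simp
  | add a b h1 h2 =>
    simp only [map_add, LinearMap.add_apply, map_sub, LinearMap.sub_apply] at *
    linear_combination (norm := module) h1 + h2
  | tmul ax2 cx2 =>
  induction x3 using TensorProduct.induction_on with
  | zero => simp
  | add a b h1 h2 =>
    simp only [map_add, LinearMap.add_apply, map_sub, LinearMap.sub_apply] at *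
    linear_combination (norm := module) h1 + h2
  | tmul ax3 cx3 =>
  induction x4 using TensorProduct.induction_on with
  | zero => simp
  | add a b h1 h2 =>
    simp only [map_add, LinearMap.add_apply, map_sub, LinearMap.sub_apply] at *
    linear_combination (norm := module) h1 + h2
  | tmul ax4 cx4 =>
  induction x5 using TensorProduct.induction_on with
  | zero => simp
  | add a b h1 h2 =>
    simp only [map_add, LinearMap.add_apply, map_sub, LinearMap.sub_apply] at *
    linear_combination (norm := module) h1 + h2
  | tmul ax5 cx5 =>
  simp only [tBr_tmul, MB.mul_assoc, MB.mul_comm, mB_left_comm MB]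
  rw [TA.fund, TensorProduct.add_tmul, TensorProduct.add_tmul]

theorem t_leib (TA : TernaryFM K A) (MB : CommAssocAlg K B) (x1 x2 x3 x4 x5 : A ⊗[K] B) :
    leib3 (tMul TA MB) (tBr TA MB) (tMul TA MB x1 x2) x3 x4 x5 =
      tMul TA MB x1 (leib3 (tMul TA MB) (tBr TA MB) x2 x3 x4 x5) + tMul TA MB x2 (leib3 (tMul TA MB) (tBr TA MB) x1 x3 x4 x5) := by
  unfold leib3
  induction x1 using TensorProduct.induction_on with
  | zero => simp
  | add a b h1 h2 =>
    simp only [map_add, LinearMap.add_apply, map_sub, LinearMap.sub_apply] at *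
    linear_combination (norm := module) h1 + h2
  | tmul ax1 cx1 =>
  induction x2 using TensorProduct.induction_on with
  | zero => simp
  | add a b h1 h2 =>
    simp only [map_add, LinearMap.add_apply, map_sub, LinearMap.sub_apply] at *
    linear_combination (norm := module) h1 + h2
  | tmul ax2 cx2 =>
  induction x3 using TensorProduct.induction_on with
  | zero => simp
  | add a b h1 h2 =>
    simp only [map_add, LinearMap.add_apply, map_sub, LinearMap.sub_apply] at *
    linear_combination (norm := module) h1 + h2
  | tmul ax3 cx3 =>
  induction x4 using TensorProduct.induction_on with
  | zero => simp
  | add a b h1 h2 =>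
    simp only [map_add, LinearMap.add_apply, map_sub, LinearMap.sub_apply] at *
    linear_combination (norm := module) h1 + h2
  | tmul ax4 cx4 =>
  induction x5 using TensorProduct.induction_on with
  | zero => simp
  | add a b h1 h2 =>
    simp only [map_add, LinearMap.add_apply, map_sub, LinearMap.sub_apply] at *
    linear_combination (norm := module) h1 + h2
  | tmul ax5 cx5 =>
  have h := TA.leib ax1 ax2 ax3 ax4 ax5
  unfold leib3 at h
  simp only [map_sub, tBr_tmul, tMul_tmul, MB.mul_assoc, MB.mul_comm, mB_left_comm MB]
  simp only [map_sub] at h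
  simp only [← TensorProduct.sub_tmul, ← TensorProduct.add_tmul]
  rw [h]

end TensorProof

/-- the tensor product of a ternary F-manifold algebra with a
commutative associative algebra is a ternary F-manifold algebra. -/
theorem stmt1 {K : Type*} [Field K] [CharZero K]
    {A B : Type*} [AddCommGroup A] [Module K A] [AddCommGroup B] [Module K B]
    (TA : TernaryFM K A) (MB : CommAssocAlg K B) :
    ∃ T : TernaryFM K (A ⊗[K] B),
      (∀ (x1 x2 : A) (y1 y2 : B),
        T.mul (x1 ⊗ₜ[K] y1) (x2 ⊗ₜ[K] y2) = (TA.mul x1 x2) ⊗ₜ[K] (MB.mul y1 y2)) ∧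
      (∀ (x1 x2 x3 : A) (y1 y2 y3 : B),
        T.br (x1 ⊗ₜ[K] y1) (x2 ⊗ₜ[K] y2) (x3 ⊗ₜ[K] y3) =
          (TA.br x1 x2 x3) ⊗ₜ[K] (MB.mul (MB.mul y1 y2) y3)) := by
  exact ⟨{ mul := tMul TA MB
           br := tBr TA MB
           mul_comm := t_comm TA MB
           mul_assoc := t_assoc TA MB
           br_skew₁₂ := t_skew12 TA MB
           br_skew₂₃ := t_skew23 TA MB
           fund := t_fund TA MB
           leib := t_leib TA MB }, tMul_tmul TA MB, tBr_tmul TA MB⟩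
end

section
/- Let (A,·,[·,·,·]) be a ternary F-manifold algebra and fix a ∈ A. Define a binary bracket [·,·]_a : A×A → A by [x,y]_a = [x,a,y]. Then (A,·,[·,·]_a) is an F-manifold algebra; in particular [·,·]_a is a Lie bracket on A and the binary Leibnizator of (A,·,[·,·]_a) satisfies the Hertling–Manin relation. -/
open TensorProduct

/-- fixing `a`, the bracket `[x,y]_a = [x,a,y]` together with the
product makes `A` an F-manifold algebra. -/
theorem stmt2 {K : Type*} [Field K] [CharZero K] {A : Type*} [AddCommGroup A] [Module K A]
    (T : TernaryFM K A) (a : A) :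
    ∃ F : FManifoldAlg K A, F.mul = T.mul ∧ ∀ x y, F.br x y = T.br x a y := by
  have sk : ∀ x y, T.br x a y = - T.br y a x := by
    intro x y
    rw [T.br_skew₁₂ x a y, T.br_skew₂₃ a x y, T.br_skew₁₂ a y x, neg_neg]
  have z0 : ∀ x, T.br x a a = 0 := by
    intro x
    have h := T.br_skew₂₃ x a a
    have h2 : (2 : K) • T.br x a a = 0 := by
      rw [two_smul]
      exact eq_neg_iff_add_eq_zero.mp h
    exact (smul_eq_zero.mp h2).resolve_left two_ne_zero
  have e : ∀ x y z, leib2 T.mul (T.br.flip a) x y z = leib3 T.mul T.br x a y z := by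
    intro x y z
    simp only [leib2, leib3, LinearMap.flip_apply]
    abel
  refine ⟨⟨T.mul, T.br.flip a, T.mul_comm, T.mul_assoc, ?_, ?_, ?_⟩, rfl, fun x y => rfl⟩
  · intro x y
    exact sk x y
  · intro x y z
    simp only [LinearMap.flip_apply]
    rw [T.fund x a y a z, z0, sk z (T.br x a y), sk z x]
    simp only [map_zero, map_neg, LinearMap.zero_apply]
    abel
  · intro x y z w
    simp only [e]
    exact T.leib x y a z w
end

section
/- Let (A,·,[·,·,·]) be a ternary F-manifold algebra and (V;ρ,μ) a representation of A. Define L3(x,y,z,u) = ρ(x,y)μ(z)u + ρ(x,z)μ(y)u − ρ(x,y·z)u. Assume the additional conditions: L1(x·y,z,t,u) = L1(y,z,t,μ(x)u) + L1(x,z,t,μ(y)u); L3(x·y,z,t,u) = −L3(y,z,t,μ(x)u) − L3(x,z,t,μ(y)u); and μ(L(x,y,z,t))u = L3(y,z,t,μ(x)u) − μ(x)L3(y,z,t,u), for all x,y,z,t ∈ A and u ∈ V. Then (V*; ρ*, −μ*) is a representation of the ternary F-manifold algebra A, where V* is the linear dual of V, ⟨ρ*(x,y)ξ, v⟩ = −⟨ξ,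 ρ(x,y)v⟩ and ⟨μ*(x)ξ, v⟩ = −⟨ξ, μ(x)v⟩ for all ξ ∈ V*, v ∈ V. -/
open TensorProduct

/-- under the additional conditions involving `L1` and `L3`,
the dual `(V*; ρ*, −μ*)` is a representation of the ternary F-manifold
algebra `A`. -/
theorem stmt6 {K : Type*} [Field K] [CharZero K]
    {A V : Type*} [AddCommGroup A] [Module K A] [AddCommGroup V] [Module K V]
    (T : TernaryFM K A) (ρ : A →ₗ[K] A →ₗ[K] V →ₗ[K] V) (μ : A →ₗ[K] V →ₗ[K] V)
    (hrep : IsFMRep T ρ μ)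
    (h1 : ∀ x y z t u, L1 T ρ μ (T.mul x y) z t u =
      L1 T ρ μ y z t (μ x u) + L1 T ρ μ x z t (μ y u))
    (h2 : ∀ x y z t u, L3 T ρ μ (T.mul x y) z t u =
      - L3 T ρ μ y z t (μ x u) - L3 T ρ μ x z t (μ y u))
    (h3 : ∀ x y z t u, μ (leib3 T.mul T.br x y z t) u =
      L3 T ρ μ y z t (μ x u) - μ x (L3 T ρ μ y z t u)) :
    ∃ (ρd : A →ₗ[K] A →ₗ[K] (V →ₗ[K] K) →ₗ[K] (V →ₗ[K] K))
      (μd : A →ₗ[K] (V →ₗ[K] K) →ₗ[K] (V →ₗ[K] K)),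
      (∀ (x y : A) (ξ : V →ₗ[K] K) (v : V), ρd x y ξ v = - ξ (ρ x y v)) ∧
      (∀ (x : A) (ξ : V →ₗ[K] K) (v : V), μd x ξ v = ξ (μ x v)) ∧
      IsFMRep T ρd μd := by
  obtain ⟨⟨r1, r2, r3⟩, a, c1, c2, c3⟩ := hrep
  have r1' : ∀ x y v, ρ x y v = - ρ y x v := fun x y v => by
    rw [r1 x y]; rfl
  have r2' : ∀ x1 x2 x3 x4 v, ρ x1 x2 (ρ x3 x4 v) - ρ x3 x4 (ρ x1 x2 v)
      = ρ (T.br x1 x2 x3) x4 v - ρ (T.br x1 x2 x4) x3 v := fun x1 x2 x3 x4 v => by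
    simpa using LinearMap.congr_fun (r2 x1 x2 x3 x4) v
  have r3' : ∀ x1 x2 x3 x4 v, ρ (T.br x1 x2 x3) x4 v
      = ρ x1 x2 (ρ x3 x4 v) + ρ x2 x3 (ρ x1 x4 v) + ρ x3 x1 (ρ x2 x4 v) :=
    fun x1 x2 x3 x4 v => by
    simpa using LinearMap.congr_fun (r3 x1 x2 x3 x4) v
  -- the relation `ρ([1,2,3],4) = ρ([1,2,4],3) + ρ([3,1,4],2) + ρ([2,3,4],1)`, in reversed form
  have r4 : ∀ x1 x2 x3 x4 v, - ρ (T.br x1 x2 x3) x4 v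
      = ρ x3 x4 (ρ x1 x2 v) + ρ x1 x4 (ρ x2 x3 v) + ρ x2 x4 (ρ x3 x1 v) := by
    intro x1 x2 x3 x4 v
    have e0 := r3' x1 x2 x3 x4 v
    have e1 := r2' x1 x2 x3 x4 v
    have e2 := r2' x2 x3 x1 x4 v
    have e3 := r2' x3 x1 x2 x4 v
    have e4 := r2' x3 x4 x1 x2 v
    have s1 : T.br x2 x3 x1 = T.br x1 x2 x3 := by
      rw [T.br_skew₂₃ x2 x3 x1, T.br_skew₁₂ x2 x1 x3, neg_neg]
    have s2 : T.br x3 x1 x2 = T.br x1 x2 x3 := by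
      rw [T.br_skew₁₂ x3 x1 x2, T.br_skew₂₃ x1 x3 x2, neg_neg]
    have s3 : T.br x3 x4 x1 = - T.br x3 x1 x4 := T.br_skew₂₃ _ _ _
    have s4 : T.br x3 x4 x2 = T.br x2 x3 x4 := by
      rw [T.br_skew₂₃ x3 x4 x2, T.br_skew₁₂ x3 x2 x4, neg_neg]
    rw [s1] at e2
    rw [s2] at e3
    rw [s3, s4] at e4
    simp only [map_neg, LinearMap.neg_apply] at e4
    linear_combination (norm := module) e0 + e2 + e3 - e4
  have lsk : ∀ x y z t, leib3 T.mul T.br x y z t = - leib3 T.mul T.br y x z t := by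
    intro x y z t
    unfold leib3
    rw [T.br_skew₁₂ x y (T.mul z t), T.br_skew₁₂ x y t, T.br_skew₁₂ x y z]
    simp only [map_neg, LinearMap.neg_apply]
    abel
  -- `L3` in terms of `L1` and `L2`
  have L3eq : ∀ x y z u, L3 T ρ μ x y z u
      = L2 T ρ μ x y z u + L1 T ρ μ x y z u + L1 T ρ μ x z y u := by
    intro x y z u
    unfold L1 L2 L3
    rw [T.br_skew₂₃ x z y]
    simp only [map_neg, LinearMap.neg_apply]
    abel
  -- the `L3` rule with the sign needed for the dual; hypothesis `h2` is not needed
  have L3mul : ∀ x y z t u, L3 T ρ μ (T.mul x y) z t u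
      = L3 T ρ μ y z t (μ x u) + L3 T ρ μ x z t (μ y u) := by
    intro x y z t u
    have e1 := h3 x y z t u
    have e2 := h3 y x z t u
    have e3 : L3 T ρ μ (T.mul x y) z t u
        = μ x (L3 T ρ μ y z t u) + μ y (L3 T ρ μ x z t u) := by
      simp only [L3eq, c1, c2, map_add]
      abel
    rw [lsk x y z t] at e1
    simp only [map_neg, LinearMap.neg_apply] at e1
    rw [e3]
    linear_combination (norm := module) e1 + e2
  let ρd : A →ₗ[K] A →ₗ[K] (V →ₗ[K] K) →ₗ[K] (V →ₗ[K] K) :=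
    LinearMap.mk₂ K (fun x y => - (ρ x y).dualMap)
      (fun x x' y => by ext ξ v; simp; ring)
      (fun c x y => by ext ξ v; simp)
      (fun x y y' => by ext ξ v; simp; ring)
      (fun c x y => by ext ξ v; simp)
  let μd : A →ₗ[K] (V →ₗ[K] K) →ₗ[K] (V →ₗ[K] K) :=
    { toFun := fun x => (μ x).dualMap
      map_add' := fun x y => by ext ξ v; simp
      map_smul' := fun c x => by ext ξ v; simp }
  have hρ : ∀ (x y : A) (ξ : V →ₗ[K] K) (v : V), ρd x y ξ v = - ξ (ρ x y v) :=
    fun x y ξ v => rfl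
  have hμ : ∀ (x : A) (ξ : V →ₗ[K] K) (v : V), μd x ξ v = ξ (μ x v) :=
    fun x ξ v => rfl
  clear_value ρd μd
  have hL1 : ∀ x y z (ξ : V →ₗ[K] K) v, L1 T ρd μd x y z ξ v = ξ (L1 T ρ μ x y z v) := by
    intro x y z ξ v
    simp only [L1, LinearMap.sub_apply, hρ, hμ, map_sub]
    ring
  have hL2 : ∀ x y z (ξ : V →ₗ[K] K) v, L2 T ρd μd x y z ξ v = - ξ (L3 T ρ μ x y z v) := by
    intro x y z ξ v
    simp only [L2, L3, LinearMap.sub_apply, LinearMap.add_apply, hρ, hμ, map_sub, map_add]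
    ring
  refine ⟨ρd, μd, hρ, hμ, ⟨?_, ?_, ?_⟩, ?_, ?_, ?_, ?_⟩
  · intro x y
    ext ξ v
    simp only [LinearMap.neg_apply, hρ]
    rw [r1' x y, map_neg]
  · intro x1 x2 x3 x4
    ext ξ v
    have e := congrArg ξ (r2' x1 x2 x3 x4 v)
    simp only [map_sub] at e
    simp only [LinearMap.sub_apply, LinearMap.comp_apply, hρ]
    linear_combination -e
  · intro x1 x2 x3 x4
    ext ξ v
    have e := congrArg ξ (r4 x1 x2 x3 x4 v)
    simp only [map_add, map_neg] at e
    simp only [LinearMap.add_apply, LinearMap.comp_apply, hρ]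
    linear_combination e
  · intro x y
    ext ξ v
    simp only [LinearMap.comp_apply, hμ]
    rw [T.mul_comm, a]
    rfl
  · intro x1 x2 x3 x4 ξ
    ext v
    simp only [LinearMap.add_apply, hμ, hL1]
    rw [h1, map_add]
  · intro x1 x2 x3 x4 ξ
    ext v
    simp only [LinearMap.add_apply, hμ, hL2]
    rw [L3mul, map_add]
    ring
  · intro x1 x2 x3 x4 ξ
    ext v
    simp only [LinearMap.sub_apply, hμ, hL2]
    rw [h3, map_sub]
    ring
end

section
/- Let (A,·,[·,·,·]) be a coherence ternary F-manifold algebra. Then (A*; ad*, −L*) is a representation of the ternary F-manifold algebra A (the coadjoint representation), where A* is the linear dual of A, ad(x,y)z = [x,y,z] is the adjoint action, L(x)y = x·y is left multiplication, and ⟨ad*(x,y)ξ, z⟩ = −⟨ξ, [x,y,z]⟩, ⟨L*(x)ξ, z⟩ = −⟨ξ, x·z⟩ for all ξ ∈ A*, x,y,z ∈ A. -/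
open TensorProduct

/-- A consequence of the fundamental identity (dividing by 3). -/
theorem three_lie_cyc {K : Type*} [Field K] [CharZero K] {A : Type*} [AddCommGroup A]
    [Module K A] (T : TernaryFM K A) (ξ : A →ₗ[K] K) (p q r s z : A) :
    ξ (T.br s z (T.br p q r)) = ξ (T.br s r (T.br p q z)) + ξ (T.br s p (T.br q r z))
      + ξ (T.br s q (T.br r p z)) := by
  obtain ⟨N, hN⟩ : ∃ N : A → A → A → A → A → K,
      ∀ a b c d e, ξ (T.br a b (T.br c d e)) = N a b c d e := ⟨_, fun _ _ _ _ _ => rfl⟩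
  have S1 : ∀ a b c d e, N a b c d e = - N b a c d e := by
    intro a b c d e; rw [← hN, ← hN, T.br_skew₁₂, map_neg]
  have S2 : ∀ a b c d e, N a b c d e = - N a b d c e := by
    intro a b c d e; rw [← hN, ← hN, T.br_skew₁₂ c d, map_neg, map_neg]
  have S3 : ∀ a b c d e, N a b c d e = - N a b c e d := by
    intro a b c d e; rw [← hN, ← hN, T.br_skew₂₃ c d, map_neg, map_neg]
  have F : ∀ a b c d e, N a b c d e = N d e a b c + N e c a b d + N c d a b e := by
    intro a b c d e
    simp only [← hN]
    rw [T.fund, T.br_skew₁₂ (T.br a b c) d e, T.br_skew₂₃ d (T.br a b c) e,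
      T.br_skew₂₃ c (T.br a b d) e, T.br_skew₁₂ c e]
    simp only [map_add, map_neg, neg_neg]
  have R : ∀ s z, N s r p q z + N s p q r z + N s q r p z
      = 2 * (N r z s p q + N p z s q r + N q z s r p) - N s z p q r := by
    intro s z
    rw [F s r p q z, F s p q r z, F s q r p z, F s z p q r]
    rw [S3 p q s r z, S3 q r s p z, S3 r p s q z, S1 z p, S3 p z s r q, S1 z q, S3 q z s p r,
      S1 z r, S3 r z s q p]
    ring
  have R1 := R s z
  have R2 := R z s
  have cyc : ∀ a b c d e, N a b c d e = N a b d e c := by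
    intro a b c d e; rw [S2, S3, neg_neg]
  rw [S1 z r, S1 z p, S1 z q, S1 r s, S1 p s, S1 q s, S1 z s, cyc s r z p q, cyc s p z q r,
    cyc s q z r p, ← cyc r z s p q, ← cyc p z s q r, ← cyc q z s r p] at R2
  simp only [hN]
  linear_combination (1/3 : K) * R1 - (2/3 : K) * R2
theorem kmap_eq_cyc {K : Type*} [Field K] {A : Type*} [AddCommGroup A] [Module K A]
    (T : TernaryFM K A) (x y z u : A) :
    kmap T x y z u = leib3 T.mul T.br x y z u + leib3 T.mul T.br x z u y
      + leib3 T.mul T.br x u y z := by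
  simp only [kmap, leib3]
  rw [T.br_skew₂₃ x z y, T.br_skew₂₃ x u y, T.br_skew₂₃ x u z]
  rw [T.mul_comm (T.br x y z) u, T.mul_comm (- T.br x y u) z, T.mul_comm (T.br x z u) y]
  simp only [map_neg]
  abel

theorem leib3_skew {K : Type*} [Field K] {A : Type*} [AddCommGroup A] [Module K A]
    (T : TernaryFM K A) (x y z u : A) :
    leib3 T.mul T.br x y z u = - leib3 T.mul T.br y x z u := by
  simp only [leib3]
  rw [T.br_skew₁₂ x y, T.br_skew₁₂ x y u, T.br_skew₁₂ x y z]
  simp only [map_neg, LinearMap.neg_apply]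
  abel

theorem kmap_leib {K : Type*} [Field K] {A : Type*} [AddCommGroup A] [Module K A]
    (T : TernaryFM K A) (x1 x2 y z u : A) :
    kmap T (T.mul x1 x2) y z u = T.mul x1 (kmap T x2 y z u) + T.mul x2 (kmap T x1 y z u) := by
  simp only [kmap_eq_cyc, T.leib, map_add]
  abel

/-- The sign-corrected coherence identity follows from the third one. -/
theorem kmap_mul {K : Type*} [Field K] {A : Type*} [AddCommGroup A] [Module K A]
    (T : TernaryFM K A)
    (hc3 : ∀ x y z t u, T.mul (leib3 T.mul T.br x y z t) u =
      kmap T y z t (T.mul x u) - T.mul x (kmap T y z t u)) (x y z t u : A) :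
    kmap T (T.mul x y) z t u = kmap T y z t (T.mul x u) + kmap T x z t (T.mul y u) := by
  have h1 := hc3 x y z t u
  have h2 := hc3 y x z t u
  rw [leib3_skew, map_neg, LinearMap.neg_apply, h2] at h1
  rw [kmap_leib]
  have h3 := sub_eq_zero.mpr h1
  rw [← sub_eq_zero, ← h3]
  abel

/-- for a coherence ternary F-manifold algebra, the coadjoint
representation `(A*; ad*, −L*)` is a representation of `A`. -/
theorem stmt7 {K : Type*} [Field K] [CharZero K]
    {A : Type*} [AddCommGroup A] [Module K A] (T : TernaryFM K A)
    (hc1 : ∀ x y z t u, leib3 T.mul T.br (T.mul x y) z t u =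
      leib3 T.mul T.br y z t (T.mul x u) + leib3 T.mul T.br x z t (T.mul y u))
    (hc2 : ∀ x y z t u, kmap T (T.mul x y) z t u =
      - kmap T x z t (T.mul y u) - kmap T y z t (T.mul x u))
    (hc3 : ∀ x y z t u, T.mul (leib3 T.mul T.br x y z t) u =
      kmap T y z t (T.mul x u) - T.mul x (kmap T y z t u)) :
    ∃ (ρd : A →ₗ[K] A →ₗ[K] (A →ₗ[K] K) →ₗ[K] (A →ₗ[K] K))
      (μd : A →ₗ[K] (A →ₗ[K] K) →ₗ[K] (A →ₗ[K] K)),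
      (∀ (x y : A) (ξ : A →ₗ[K] K) (z : A), ρd x y ξ z = - ξ (T.br x y z)) ∧
      (∀ (x : A) (ξ : A →ₗ[K] K) (z : A), μd x ξ z = ξ (T.mul x z)) ∧
      IsFMRep T ρd μd := by
  obtain ⟨D, hD⟩ : ∃ D : (A →ₗ[K] A) →ₗ[K] (A →ₗ[K] K) →ₗ[K] (A →ₗ[K] K),
      ∀ f ξ z, D f ξ z = ξ (f z) :=
    ⟨Module.Dual.transpose (R := K) (M := A) (M' := A), fun _ _ _ => rfl⟩
  obtain ⟨ρ, hρ⟩ : ∃ ρ : A →ₗ[K] A →ₗ[K] (A →ₗ[K] K) →ₗ[K] (A →ₗ[K] K),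
      ∀ x y ξ z, ρ x y ξ z = - ξ (T.br x y z) :=
    ⟨T.br.compr₂ (D ∘ₗ (-LinearMap.id : (A →ₗ[K] A) →ₗ[K] (A →ₗ[K] A))), fun x y ξ z => by simp [hD]⟩
  obtain ⟨μ, hμ⟩ : ∃ μ : A →ₗ[K] (A →ₗ[K] K) →ₗ[K] (A →ₗ[K] K),
      ∀ x ξ z, μ x ξ z = ξ (T.mul x z) :=
    ⟨D ∘ₗ T.mul, fun x ξ z => by simp [hD]⟩
  have hL1 : ∀ x y z (ξ : A →ₗ[K] K) w,
      L1 T ρ μ x y z ξ w = ξ (leib3 T.mul T.br x y z w) := by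
    intro x y z ξ w
    simp only [L1, leib3, LinearMap.sub_apply, hρ, hμ, map_sub]
    ring
  have hL2 : ∀ x y z (ξ : A →ₗ[K] K) w,
      L2 T ρ μ x y z ξ w = - ξ (kmap T x y z w) := by
    intro x y z ξ w
    simp only [L2, kmap, LinearMap.sub_apply, LinearMap.add_apply, hρ, hμ, map_add]
    rw [T.br_skew₂₃ x (T.mul y z) w, T.mul_comm w y, map_neg]
    ring
  refine ⟨ρ, μ, hρ, hμ, ⟨?_, ?_, ?_⟩, ?_, ?_, ?_, ?_⟩
  · intro x y
    ext ξ z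
    simp only [LinearMap.neg_apply, hρ]
    rw [T.br_skew₁₂ x y z, map_neg]
  · intro x1 x2 x3 x4
    ext ξ z
    simp only [LinearMap.sub_apply, LinearMap.comp_apply, hρ]
    rw [T.fund x1 x2 x3 x4 z, T.br_skew₁₂ (T.br x1 x2 x4) x3 z]
    simp only [map_add, map_neg]
    ring
  · intro x1 x2 x3 x4
    ext ξ z
    simp only [LinearMap.add_apply, LinearMap.comp_apply, hρ]
    rw [T.br_skew₁₂ (T.br x1 x2 x3), T.br_skew₂₃ x4 (T.br x1 x2 x3)]
    simp only [neg_neg]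
    have h := three_lie_cyc T ξ x1 x2 x3 x4 z
    rw [h, T.br_skew₁₂ x3 x4, T.br_skew₁₂ x1 x4, T.br_skew₁₂ x2 x4]
    simp only [map_neg]
    ring
  · intro x y
    ext ξ z
    simp only [LinearMap.comp_apply, hμ]
    rw [T.mul_comm x y, T.mul_assoc]
  · intro x1 x2 x3 x4 ξ
    ext w
    simp only [LinearMap.add_apply, hL1, hμ, hc1, map_add]
  · intro x1 x2 x3 x4 ξ
    ext w
    simp only [LinearMap.add_apply, hL2, hμ, kmap_mul T hc3, map_add]
    ring
  · intro x1 x2 x3 x4 ξ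
    ext w
    simp only [LinearMap.sub_apply, hL2, hμ, hc3, map_sub]
    ring
end

section
/- Let (A,⋄,{·,·,·}) be a ternary pre-F-manifold algebra. Then (A,·,[·,·,·]) is a ternary F-manifold algebra, where x·y = x⋄y + y⋄x and [x,y,z] = {x,y,z} + {y,z,x} + {z,x,y}. (This is called the sub-adjacent ternary F-manifold algebra of (A,⋄,{·,·,·}).) -/
open TensorProduct

section Helpers

variable {K : Type*} [Field K] {A : Type*} [AddCommGroup A] [Module K A]

/-- The symmetrized product as a bilinear map. -/
def symLin (d : A →ₗ[K] A →ₗ[K] A) : A →ₗ[K] A →ₗ[K] A := d + d.flip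


theorem symLin_apply (d : A →ₗ[K] A →ₗ[K] A) (x y : A) : symLin d x y = sym d x y := rfl

/-- The cyclic bracket as a trilinear map. -/
def cbrLin (t : A →ₗ[K] A →ₗ[K] A →ₗ[K] A) : A →ₗ[K] A →ₗ[K] A →ₗ[K] A :=
  LinearMap.mk₂ K (fun x y => t x y + (t y).flip x + (t.flip x).flip y)
    (by intros; ext; simp; abel) (by intros; ext; simp)
    (by intros; ext; simp; abel) (by intros; ext; simp)


theorem cbrLin_apply (t : A →ₗ[K] A →ₗ[K] A →ₗ[K] A) (x y z : A) :
    cbrLin t x y z = cbr t x y z := rfl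

/-- The operator `L(x,y,z,w) ⋄ _` vanishes in a ternary pre-F-manifold algebra. -/
theorem Lpre_dia [CharZero K] (P : TernaryPreFM K A) (x y z w u : A) :
    P.dia (Lpre P.dia P.tri x y z w) u = 0 := by
  have h1 := P.pf1 z w y x u
  have h3 := P.pf3 x y z w u
  have s := P.tri_skew
  have Zn := P.zinbiel
  simp only [F1, F2, Lpre, cbr, sym, map_add, map_sub, LinearMap.add_apply,
    LinearMap.sub_apply] at h1 h3 ⊢
  simp only [Zn, s y z, s y w, s y x, s z x, s w x, s y (P.dia _ _), s x (P.dia _ _),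
    map_neg, LinearMap.neg_apply] at h1 h3 ⊢
  linear_combination (norm := module) (1/2 : K) • h1 + (1/2 : K) • h3


theorem cbr_fund (P : TernaryPreFM K A) (x1 x2 x3 x4 x5 : A) :
    cbr P.tri x1 x2 (cbr P.tri x3 x4 x5) =
      cbr P.tri (cbr P.tri x1 x2 x3) x4 x5 + cbr P.tri x3 (cbr P.tri x1 x2 x4) x5 +
        cbr P.tri x3 x4 (cbr P.tri x1 x2 x5) := by
  have a1 := P.preLie₁ x1 x2 x3 x4 x5
  have a2 := P.preLie₁ x1 x2 x4 x5 x3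
  have a3 := P.preLie₁ x1 x2 x5 x3 x4
  have b1 := P.preLie₂ x3 x4 x5 x1 x2
  have b2 := P.preLie₂ x3 x4 x5 x2 x1
  have s := P.tri_skew
  have e : ∀ a b x y z, P.tri a b (cbr P.tri x y z) =
    P.tri a b (P.tri x y z) + P.tri a b (P.tri y z x) + P.tri a b (P.tri z x y) := by
    intros; simp [cbr]
  have c := s x2 (cbr P.tri x3 x4 x5) x1
  have n : ∀ p q a b c, P.tri p q (P.tri a b c) = - P.tri p q (P.tri b a c) := by
    intro p q a b c; rw [s a b c, map_neg]
  have o : ∀ x y z, cbr P.tri x y z = P.tri x y z + P.tri y z x + P.tri z x y :=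
    fun _ _ _ => rfl
  rw [o x1 x2 (cbr P.tri x3 x4 x5), o (cbr P.tri x1 x2 x3) x4 x5,
    o x3 (cbr P.tri x1 x2 x4) x5, o x3 x4 (cbr P.tri x1 x2 x5),
    e x1 x2, e x4 x5, e x5 x3, e x3 x4]
  linear_combination (norm := module) a1 + a2 + a3 + b1 - b2 + c
    - n x3 x4 x5 x2 x1 - n x4 x5 x3 x2 x1 - n x5 x3 x4 x2 x1


theorem Lpre_eq (P : TernaryPreFM K A) (a b c d : A) :
    Lpre P.dia P.tri a b c d =
      F1 P.dia P.tri a b c d + F1 P.dia P.tri a b d c + F2 P.dia P.tri a c d b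
        - F2 P.dia P.tri b c d a := by
  have s := P.tri_skew
  simp only [F1, F2, Lpre, cbr, sym, map_add, LinearMap.add_apply, s c a, s d a,
    s (P.dia _ _) a, map_neg]
  module

theorem Lpre_leib [CharZero K] (P : TernaryPreFM K A) (a b c d e : A) :
    Lpre P.dia P.tri (sym P.dia a b) c d e =
      sym P.dia a (Lpre P.dia P.tri b c d e) + sym P.dia b (Lpre P.dia P.tri a c d e) := by
  have h1 := P.pf3 a c d e b
  have h2 := P.pf3 b c d e a
  have f : F2 P.dia P.tri c d e (sym P.dia a b) =
      F2 P.dia P.tri c d e (P.dia a b) + F2 P.dia P.tri c d e (P.dia b a) := by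
    simp only [F2, sym, map_add]; abel
  rw [Lpre_dia] at h1 h2
  simp only [sym, Lpre_dia]
  change Lpre P.dia P.tri (sym P.dia a b) c d e = _
  simp only [Lpre_eq, P.pf1, P.pf2, f, map_add, map_sub]
  linear_combination (norm := module) h1 + h2

end Helpers

/-- a ternary pre-F-manifold algebra gives a sub-adjacent ternary
F-manifold algebra via `x·y = x⋄y + y⋄x`, `[x,y,z] = {x,y,z}+{y,z,x}+{z,x,y}`. -/
theorem stmt8 {K : Type*} [Field K] [CharZero K]
    {A : Type*} [AddCommGroup A] [Module K A] (P : TernaryPreFM K A) :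
    ∃ T : TernaryFM K A,
      (∀ x y, T.mul x y = sym P.dia x y) ∧
      (∀ x y z, T.br x y z = cbr P.tri x y z) := by
  refine ⟨⟨symLin P.dia, cbrLin P.tri, ?_, ?_, ?_, ?_, ?_, ?_⟩, fun _ _ => rfl,
    fun _ _ _ => rfl⟩
  · intro x y
    simp only [symLin_apply, sym]; abel
  · intro x y z
    have Zn := P.zinbiel
    simp only [symLin_apply, sym, map_add, LinearMap.add_apply, Zn]; abel
  · intro x y z
    have s := P.tri_skew
    simp only [cbrLin_apply, cbr, s y x, s z y, s x z]; abel
  · intro x y z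
    have s := P.tri_skew
    simp only [cbrLin_apply, cbr, s y x, s z y, s x z]; abel
  · intro x1 x2 x3 x4 x5
    exact cbr_fund P x1 x2 x3 x4 x5
  · intro x1 x2 x3 x4 x5
    exact Lpre_leib P x1 x2 x3 x4 x5
end

section
/- Let (A,⋄,{·,·,·}) be a ternary pre-Nambu-Poisson algebra. Then (A,·,[·,·,·]) is a ternary Nambu-Poisson algebra, where x·y = x⋄y + y⋄x and [x,y,z] = {x,y,z} + {y,z,x} + {z,x,y}. -/
open TensorProduct

/-- a ternary pre-Nambu–Poisson algebra gives a sub-adjacent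
ternary Nambu–Poisson algebra. -/
theorem stmt9 {K : Type*} [Field K] [CharZero K]
    {A : Type*} [AddCommGroup A] [Module K A] (P : TernaryPreNP K A) :
    ∃ T : TernaryNP K A,
      (∀ x y, T.mul x y = sym P.dia x y) ∧
      (∀ x y z, T.br x y z = cbr P.tri x y z) := by
  have hd : ∀ x y z, P.dia (sym P.dia x y) z = P.dia x (P.dia y z) := by
    intro x y z
    rw [P.zinbiel x y z, sym, map_add, LinearMap.add_apply, add_comm]
  have hdc : ∀ x y z, P.dia x (P.dia y z) = P.dia y (P.dia x z) := by
    intro x y z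
    rw [P.zinbiel, P.zinbiel, add_comm]
  have hs13 : ∀ x1 x2 x3 x4 x5, P.tri x1 (cbr P.tri x2 x3 x4) x5 =
      -(P.tri x2 x3 (P.tri x4 x1 x5) + P.tri x3 x4 (P.tri x2 x1 x5)
        + P.tri x4 x2 (P.tri x3 x1 x5)) := by
    intro x1 x2 x3 x4 x5
    rw [P.tri_skew, P.preLie₂]
  have hsn : ∀ x y a b c, P.tri x y (P.tri a b c) = - P.tri x y (P.tri b a c) := by
    intro x y a b c
    rw [P.tri_skew a b c, map_neg]
  let m : A →ₗ[K] A →ₗ[K] A := P.dia + P.dia.flip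
  let b : A →ₗ[K] A →ₗ[K] A →ₗ[K] A :=
    let L : (A →ₗ[K] A →ₗ[K] A) →ₗ[K] (A →ₗ[K] A →ₗ[K] A) := LinearMap.lflip.toLinearMap
    P.tri + (L ∘ₗ P.tri).flip + L ∘ₗ P.tri.flip
  have hm : ∀ x y, m x y = sym P.dia x y := fun x y => rfl
  have hb : ∀ x y z, b x y z = cbr P.tri x y z := fun x y z => rfl
  refine ⟨⟨m, b, ?_, ?_, ?_, ?_, ?_, ?_⟩, hm, hb⟩
  · intro x y
    simp only [hm, sym]
    abel
  · intro x y z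
    simp only [hm]
    rw [sym, hd, sym, sym, hd y z x, sym, map_add, map_add, hdc x z y, hdc y z x]
    abel
  · intro x y z
    simp only [hb, cbr]
    rw [P.tri_skew x y z, P.tri_skew y z x, P.tri_skew z x y]
    abel
  · intro x y z
    simp only [hb, cbr]
    rw [P.tri_skew x y z, P.tri_skew y z x, P.tri_skew z x y]
    abel
  · intro x1 x2 x3 x4 x5
    simp only [hb]
    have e1 := P.preLie₁ x1 x2 x3 x4 x5
    have e2 := P.preLie₁ x1 x2 x4 x5 x3
    have e3 := P.preLie₁ x1 x2 x5 x3 x4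
    have f : ∀ u v x y z, P.tri u v (cbr P.tri x y z) =
        P.tri u v (P.tri x y z) + P.tri u v (P.tri y z x) + P.tri u v (P.tri z x y) := by
      intro u v x y z
      simp only [cbr, map_add]
    have g1 : P.tri x2 (cbr P.tri x3 x4 x5) x1 = P.tri x3 x4 (P.tri x2 x5 x1)
        + P.tri x4 x5 (P.tri x2 x3 x1) + P.tri x5 x3 (P.tri x2 x4 x1) := by
      rw [hs13, hsn x3 x4 x5, hsn x4 x5 x3, hsn x5 x3 x4]
      abel
    have g2 := P.preLie₂ x3 x4 x5 x1 x2
    rw [cbr, f, g1, g2, e1, e2, e3]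
    rw [cbr.eq_1 P.tri (cbr P.tri x1 x2 x3), cbr.eq_1 P.tri x3 (cbr P.tri x1 x2 x4),
      cbr.eq_1 P.tri x3 x4 (cbr P.tri x1 x2 x5), f, f, f]
    abel
  · intro x1 x2 x3 x4
    simp only [hb, hm]
    have h1 : P.tri x1 x2 (sym P.dia x3 x4) = P.dia x3 (P.tri x1 x2 x4)
        + P.dia (cbr P.tri x1 x2 x3) x4 + (P.dia x4 (P.tri x1 x2 x3)
        + P.dia (cbr P.tri x1 x2 x4) x3) := by
      rw [sym, map_add, P.np1, P.np1]
    have h3 : P.tri (sym P.dia x3 x4) x1 x2 =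
        P.dia x4 (P.tri x3 x1 x2) + P.dia x3 (P.tri x4 x1 x2) := by
      rw [P.tri_skew, P.np2, P.tri_skew x3 x1, P.tri_skew x4 x1, map_neg, map_neg]
      abel
    have h4 : ∀ w x y z, P.dia w (cbr P.tri x y z) =
        P.dia w (P.tri x y z) + P.dia w (P.tri y z x) + P.dia w (P.tri z x y) := by
      intro w x y z
      simp only [cbr, map_add]
    rw [cbr, h1, h3, P.np2, sym, sym, h4, h4]
    abel
end

section
/- Let (A,·) be a commutative associative algebra over K, let μ : A → End(V) be a representation of (A,·) (i.e. μ is linear with μ(x·y) = μ(x)μ(y)), and let T : V → A be a linear map satisfying Tu·Tv = T(μ(Tu)v + μ(Tv)u) for all u,v ∈ V (a relative Rota–Baxter operator). Then the operation u⋄v = μ(Tu)v makes V a Zinbiel algebra, i.e. u⋄(v⋄w) = (v⋄u)⋄w + (u⋄v)⋄w for all u,v,w ∈ V. -/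
open TensorProduct

/-- a relative Rota–Baxter operator on a commutative associative
algebra induces a Zinbiel structure `u ⋄ v = μ(Tu)v`. -/
theorem stmt11 {K : Type*} [Field K] [CharZero K]
    {A V : Type*} [AddCommGroup A] [Module K A] [AddCommGroup V] [Module K V]
    (m : A →ₗ[K] A →ₗ[K] A)
    (hcomm : ∀ x y, m x y = m y x)
    (hassoc : ∀ x y z, m (m x y) z = m x (m y z))
    (μ : A →ₗ[K] V →ₗ[K] V) (hμ : ∀ x y, μ (m x y) = μ x ∘ₗ μ y)
    (Tm : V →ₗ[K] A)
    (hrb : ∀ u v, m (Tm u) (Tm v) = Tm (μ (Tm u) v + μ (Tm v) u)) :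
    ∀ u v w, μ (Tm u) (μ (Tm v) w) =
      μ (Tm (μ (Tm v) u)) w + μ (Tm (μ (Tm u) v)) w := by
  intro u v w
  have h := congrArg (fun f => f w) (hμ (Tm u) (Tm v))
  simp only [hrb, map_add, LinearMap.add_apply, LinearMap.comp_apply] at h
  rw [← h, add_comm]
end

section
/- Let (A,[·,·,·]) be a 3-Lie algebra over K, let (V;ρ) be a representation of (A,[·,·,·]), and let T : V → A be a linear map satisfying [Tu,Tv,Tw] = T(ρ(Tu,Tv)w + ρ(Tv,Tw)u + ρ(Tw,Tu)v) for all u,v,w ∈ V (a relative Rota–Baxter operator). Then the operation {u,v,w} = ρ(Tu,Tv)w makes V a 3-pre-Lie algebra. -/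
open TensorProduct

/-- a relative Rota–Baxter operator on a 3-Lie algebra induces a
3-pre-Lie structure `{u,v,w} = ρ(Tu,Tv)w`. -/
theorem stmt12 {K : Type*} [Field K] [CharZero K]
    {A V : Type*} [AddCommGroup A] [Module K A] [AddCommGroup V] [Module K V]
    (b : A →ₗ[K] A →ₗ[K] A →ₗ[K] A)
    (hskew₁₂ : ∀ x y z, b x y z = - b y x z)
    (hskew₂₃ : ∀ x y z, b x y z = - b x z y)
    (hfund : ∀ x1 x2 x3 x4 x5,
      b x1 x2 (b x3 x4 x5) =
        b (b x1 x2 x3) x4 x5 + b x3 (b x1 x2 x4) x5 + b x3 x4 (b x1 x2 x5))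
    (ρ : A →ₗ[K] A →ₗ[K] V →ₗ[K] V)
    (hρskew : ∀ x y, ρ x y = - ρ y x)
    (hρ1 : ∀ x1 x2 x3 x4,
      ρ x1 x2 ∘ₗ ρ x3 x4 - ρ x3 x4 ∘ₗ ρ x1 x2 = ρ (b x1 x2 x3) x4 - ρ (b x1 x2 x4) x3)
    (hρ2 : ∀ x1 x2 x3 x4,
      ρ (b x1 x2 x3) x4 = ρ x1 x2 ∘ₗ ρ x3 x4 + ρ x2 x3 ∘ₗ ρ x1 x4 + ρ x3 x1 ∘ₗ ρ x2 x4)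
    (Tm : V →ₗ[K] A)
    (hrb : ∀ u v w, b (Tm u) (Tm v) (Tm w) =
      Tm (ρ (Tm u) (Tm v) w + ρ (Tm v) (Tm w) u + ρ (Tm w) (Tm u) v)) :
    ∃ P : ThreePreLie K V, ∀ u v w, P.tri u v w = ρ (Tm u) (Tm v) w := by
  have hc : ∀ u v w, Tm (cbr (ρ.compl₁₂ Tm Tm) u v w) = b (Tm u) (Tm v) (Tm w) := by
    intro u v w
    rw [hrb]
    rfl
  refine ⟨⟨ρ.compl₁₂ Tm Tm, ?_, ?_, ?_⟩, fun u v w => rfl⟩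
  · intro x y z
    simp only [LinearMap.compl₁₂_apply]
    rw [hρskew]
    rfl
  · intro x1 x2 x3 x4 x5
    have h := LinearMap.congr_fun (hρ1 (Tm x1) (Tm x2) (Tm x3) (Tm x4)) x5
    simp only [LinearMap.compl₁₂_apply, hc]
    rw [hρskew (Tm x3) (b _ _ _)]
    simp only [LinearMap.sub_apply, LinearMap.comp_apply, LinearMap.neg_apply] at h ⊢
    rw [sub_eq_iff_eq_add] at h
    rw [h]
    abel
  · intro x1 x2 x3 x4 x5
    simp only [LinearMap.compl₁₂_apply, hc]
    rw [hρ2]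
    rfl
end

section
/- Let (A,·,[·,·,·]) be a ternary F-manifold algebra, let (V;ρ,μ) be a representation of A, and let T : V → A be a relative Rota–Baxter operator on A with respect to (V;ρ,μ). Define u⋄v = μ(Tu)v and {u,v,w} = ρ(Tu,Tv)w on V. Then (V,⋄,{·,·,·}) is a ternary pre-F-manifold algebra, and T is a homomorphism from the sub-adjacent ternary F-manifold algebra V^c = (V, ·_T, [·,·,·]_T) to (A,·,[·,·,·]); that is, T(u ·_T v) = Tu·Tv and T([u,v,w]_T) = [Tu,Tv,Tw], where u ·_T v = u⋄v + v⋄u and [u,v,w]_T = {u,v,w} + {v,w,u} + {w,u,v}. -/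
open TensorProduct

/-- a relative Rota–Baxter operator on a ternary F-manifold
algebra induces a ternary pre-F-manifold algebra on `V`, and `T` is a
homomorphism from the sub-adjacent algebra `V^c` to `A`. -/
theorem stmt13 {K : Type*} [Field K] [CharZero K]
    {A V : Type*} [AddCommGroup A] [Module K A] [AddCommGroup V] [Module K V]
    (T : TernaryFM K A) (ρ : A →ₗ[K] A →ₗ[K] V →ₗ[K] V) (μ : A →ₗ[K] V →ₗ[K] V)
    (hrep : IsFMRep T ρ μ) (Tm : V →ₗ[K] A) (hrb : IsRelRB T ρ μ Tm) :
    ∃ P : TernaryPreFM K V,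
      (∀ u v, P.dia u v = μ (Tm u) v) ∧
      (∀ u v w, P.tri u v w = ρ (Tm u) (Tm v) w) ∧
      (∀ u v, Tm (sym P.dia u v) = T.mul (Tm u) (Tm v)) ∧
      (∀ u v w, Tm (cbr P.tri u v w) = T.br (Tm u) (Tm v) (Tm w)) := by
  obtain ⟨⟨hsk, hr1, hr2⟩, hm, h1, h2, h3⟩ := hrep
  obtain ⟨hb1, hb2⟩ := hrb
  let d : V →ₗ[K] V →ₗ[K] V := μ ∘ₗ Tm
  let t : V →ₗ[K] V →ₗ[K] V →ₗ[K] V := ρ.compl₁₂ Tm Tm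
  have hd : ∀ u v, d u v = μ (Tm u) v := fun u v => rfl
  have ht : ∀ u v w, t u v w = ρ (Tm u) (Tm v) w := fun u v w => rfl
  have hs : ∀ u v, Tm (sym d u v) = T.mul (Tm u) (Tm v) := fun u v => (hb1 u v).symm
  have hc : ∀ u v w, Tm (cbr t u v w) = T.br (Tm u) (Tm v) (Tm w) :=
    fun u v w => (hb2 u v w).symm
  have hF1 : ∀ x y z u, F1 d t x y z u = L1 T ρ μ (Tm x) (Tm y) (Tm z) u := by
    intro x y z u
    simp only [F1, L1, hd, ht, hc]
  have hF2 : ∀ x y z u, F2 d t x y z u = L2 T ρ μ (Tm x) (Tm y) (Tm z) u := by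
    intro x y z u
    simp only [F2, L2, hd, ht, hs]
  have hL : ∀ x y z u, Tm (Lpre d t x y z u) =
      leib3 T.mul T.br (Tm x) (Tm y) (Tm z) (Tm u) := by
    intro x y z u
    simp only [Lpre, leib3, map_sub, hs, hc]
  refine ⟨⟨d, t, ?_, ?_, ?_, ?_, ?_, ?_, ?_⟩, hd, ht, hs, hc⟩
  · intro x y z
    have h := LinearMap.congr_fun (hm (Tm x) (Tm y)) z
    rw [← hs] at h
    simp only [sym, map_add, LinearMap.add_apply, LinearMap.comp_apply] at h
    simp only [hd] at h ⊢
    rw [← h, add_comm]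
  · intro x y z
    simp only [ht]
    rw [hsk (Tm x) (Tm y), LinearMap.neg_apply]
  · intro x1 x2 x3 x4 x5
    have h := LinearMap.congr_fun (hr1 (Tm x1) (Tm x2) (Tm x3) (Tm x4)) x5
    rw [hsk (T.br (Tm x1) (Tm x2) (Tm x4)) (Tm x3)] at h
    simp only [LinearMap.sub_apply, LinearMap.neg_apply, LinearMap.comp_apply,
      sub_neg_eq_add] at h
    simp only [ht, hc]
    exact sub_eq_iff_eq_add.mp h
  · intro x1 x2 x3 x4 x5
    have h := LinearMap.congr_fun (hr2 (Tm x1) (Tm x2) (Tm x3) (Tm x4)) x5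
    simp only [ht, hc]
    exact h
  · intro x1 x2 x3 x4 x5
    simp only [hF1, hs, hd]
    exact h1 _ _ _ _ _
  · intro x1 x2 x3 x4 x5
    simp only [hF2, hs, hd]
    exact h2 _ _ _ _ _
  · intro x1 x2 x3 x4 x5
    simp only [hF2, hd, hL]
    exact h3 _ _ _ _ _
end
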